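/- Let μ and ν be compactly supported probability measures on ℝ. There exists exactly one compactly supported probability measure ρ on ℝ with the property that for some ε > 0 and all u ∈ (−ε,ε)∖{0} one has u ∈ D̂_ρ ∩ D̂_μ ∩ D̂_ν and R̂_ρ(u) = R̂_μ(u) + R̂_ν(u). (This ρ is the free additive convolution μ ⊞ ν.) -/

import Mathlib

/-!
**Existence.** The measure `ρ` is the distribution of a sum of two free self-adjoint operators. Let
`K = L²(μ ⊗ ν)`, with the constant function `ξ = 1` as distinguished vector; multiplication by the
two coordinates gives self-adjoint operators on `K` with distributions `μ` and `ν` at `ξ`. On the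
free product of two copies of `(K, ξ)` let `A` be the first operator acting from the first copy and
`B` the second one acting from the second copy, and let `Ω` be the vacuum vector. Then `ρ` is the
spectral measure of `A + B` at `Ω`, obtained from the continuous functional calculus and the
Riesz-Markov-Kakutani theorem (`exists_spectral_measure`).

Let `u ≠ 0` be small, and let `a`, `b` be such that the resolvents of `A` at `a` and of `B` at `b`
have vacuum expectation `u`. Write them as `u (1 - E_A)` and `u (1 - E_B)`, where `E_A` and `E_B`
are centred and have norm less than `1`. One checks that
`(a + b - u⁻¹ - A - B)⁻¹ = u (1 - E_B) (1 - E_A E_B)⁻¹ (1 - E_A)`.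
Expanding the middle factor in a Neumann series and applying the result to `Ω`, freeness kills every
term but the first, so that this resolvent also has vacuum expectation `u` (`free_resolvent`). In
terms of inverse Stieltjes transforms this is the additivity of the `R`-transforms
(`exists_free_convolution`).

**The real transforms.** For a measure carried by `[-R, R]` and `u ≠ 0` with `|u| R ≤ 1/8`, the
value `-u` is attained by the Stieltjes transform at a point within `R` of `u⁻¹` (`exists_Gst_eq`,
intermediate value theorem). Strict monotonicity on each side of the support makes this preimage
unique (`Ginv_eq`), and the attained values show `u ∈ D̂` (`mem_Dhat`).

**Uniqueness.** Equal `R`-transforms near `0` give equal Stieltjes transforms near infinity, hence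
equal moments, hence equal measures by Weierstrass approximation (`eq_of_Ginv_eq`).
-/

open MeasureTheory Filter Set

noncomputable section

/-- The topological support of a Borel measure on `ℝ`. -/
def msupp (μ : Measure ℝ) : Set ℝ := {x : ℝ | ∀ U ∈ nhds x, μ U ≠ 0}

/-- Compact support: some compact set has full measure. -/
def HasCompactSupp (μ : Measure ℝ) : Prop := ∃ K : Set ℝ, IsCompact K ∧ μ K = 1

/-- `a_μ`, the infimum of the support. -/
def aInf (μ : Measure ℝ) : ℝ := sInf (msupp μ)

/-- `b_μ`, the supremum of the support. -/
def bSup (μ : Measure ℝ) : ℝ := sSup (msupp μ)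

/-- The (real) Stieltjes transform `G_μ(z) = ∫ (λ - z)⁻¹ dμ(λ)`. -/
def Gst (μ : Measure ℝ) (z : ℝ) : ℝ := ∫ l, (l - z)⁻¹ ∂μ

/-- `G_μ(a_μ) = lim_{z ↑ a_μ} G_μ(z) ∈ (0,∞]`, as the supremum (in `EReal`) of the values of
`G_μ` on `(-∞, a_μ)` (the two agree since `G_μ` is increasing there). -/
def GaSup (μ : Measure ℝ) : EReal :=
  sSup ((fun z => ((Gst μ z : ℝ) : EReal)) '' Set.Iio (aInf μ))

/-- `G_μ(b_μ) = lim_{z ↓ b_μ} G_μ(z) ∈ [-∞,0)`, as the infimum (in `EReal`) of the values of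
`G_μ` on `(b_μ, ∞)` (the two agree since `G_μ` is increasing there). -/
def GbInf (μ : Measure ℝ) : EReal :=
  sInf ((fun z => ((Gst μ z : ℝ) : EReal)) '' Set.Ioi (bSup μ))

/-- The interval `D̂_μ = (-G_μ(a_μ), -G_μ(b_μ)) ⊆ ℝ`. -/
def Dhat (μ : Measure ℝ) : Set ℝ :=
  {u : ℝ | -(GaSup μ) < (u : EReal) ∧ (u : EReal) < -(GbInf μ)}

/-- The inverse `G_μ^⟨-1⟩` of the restriction of `G_μ` to `ℝ ∖ [a_μ, b_μ]`. -/
def Ginv (μ : Measure ℝ) (g : ℝ) : ℝ :=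
  Function.invFunOn (Gst μ) (Set.Iio (aInf μ) ∪ Set.Ioi (bSup μ)) g

/-- The real `R`-transform `R̂_μ(u) = G_μ^⟨-1⟩(-u) - u⁻¹`, meaningful for `u ∈ D̂_μ ∖ {0}`. -/
def Rhat (μ : Measure ℝ) (u : ℝ) : ℝ := Ginv μ (-u) - u⁻¹

/-- `ρ` is a free additive convolution of `μ` and `ν`. -/
def IsFreeAdd (μ ν ρ : Measure ℝ) : Prop :=
  IsProbabilityMeasure ρ ∧ HasCompactSupp ρ ∧
  ∃ ε > (0 : ℝ), ∀ u : ℝ, u ∈ Set.Ioo (-ε) ε → u ≠ 0 →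
    u ∈ Dhat ρ ∧ u ∈ Dhat μ ∧ u ∈ Dhat ν ∧ Rhat ρ u = Rhat μ u + Rhat ν u

/-- `μ` is nondegenerate: not a point mass. -/
def Nondeg (μ : Measure ℝ) : Prop := ¬ ∃ c : ℝ, μ = Measure.dirac c

/-- The logarithmic potential `U_ρ(z) = ∫ log |z - λ| dρ(λ)`. -/
def Upot (ρ : Measure ℝ) (z : ℝ) : ℝ := ∫ l, Real.log |z - l| ∂ρ

/-- `E_{μ,ν,z}(g) = ∫₀^g s R̂_μ'(-s) ds + ∫ log (λ - z + R̂_μ(-g)) dν(λ)`. -/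
def Efun (μ ν : Measure ℝ) (z : ℝ) (g : ℝ) : ℝ :=
  (∫ s in (0:ℝ)..g, s * deriv (Rhat μ) (-s)) + ∫ l, Real.log (l - z + Rhat μ (-g)) ∂ν

/-- The domain `Ê_{μ,ν,z}` of `E_{μ,ν,z}`. -/
def Ehat (μ ν : Measure ℝ) (z : ℝ) : Set ℝ :=
  {g : ℝ | -g ∈ Dhat μ ∧ g ≠ 0 ∧ z - Rhat μ (-g) < aInf ν}

/-- `F̂_{μ,ν}(h) = R̂_μ(-G_ν(h)) + h`. -/
def Fhat (μ ν : Measure ℝ) (h : ℝ) : ℝ := Rhat μ (-(Gst ν h)) + h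

/-- The domain of `F̂_{μ,ν}`. -/
def FhatDom (μ ν : Measure ℝ) : Set ℝ := {h : ℝ | h < aInf ν ∧ -(Gst ν h) ∈ Dhat μ}

/-- `Ĥ_{μ,ν}`: points of the domain to the left of which `F̂_{μ,ν}'` is positive. -/
def Hhat (μ ν : Measure ℝ) : Set ℝ :=
  {h : ℝ | h ∈ FhatDom μ ν ∧ ∀ t ∈ FhatDom μ ν, t < h → 0 < deriv (Fhat μ ν) t}

/-- `h*_{μ,ν} = sup Ĥ_{μ,ν}`. -/
def hstar (μ ν : Measure ℝ) : ℝ := sSup (Hhat μ ν)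

end

open scoped CompactlySupported

/-! ### Spectral measures -/

/-- The spectral measure of a self-adjoint operator `T` at a unit vector `Ω`. It is characterized
here through the resolvent: if `v = (z - T)⁻¹ Ω`, then `⟨Ω, v⟩` is the integral of `(z - l)⁻¹`. -/
lemma exists_spectral_measure {H : Type*} [NormedAddCommGroup H] [InnerProductSpace ℂ H]
    [CompleteSpace H] (T : H →L[ℂ] H) (hT : IsSelfAdjoint T) (Ω : H) (hΩ : ‖Ω‖ = 1) :
    ∃ ρ : Measure ℝ, IsProbabilityMeasure ρ ∧ ρ (Icc (-‖T‖) ‖T‖) = 1 ∧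
      ∀ z : ℝ, ‖T‖ < |z| → ∀ v : H, (z : ℂ) • v - T v = Ω →
        ∫ l, (z - l)⁻¹ ∂ρ = (inner ℂ Ω v).re := by
  classical
  set X := spectrum ℝ T with hX
  have : Nontrivial H := ⟨Ω, 0, by intro h; simp [h] at hΩ⟩
  have : CompactSpace X := isCompact_iff_compactSpace.mp (spectrum.isCompact (𝕜 := ℝ) T)
  let Φ := cfcHom (R := ℝ) (a := T) hT
  let Λ₀ : C_c(X, ℝ) →ₗ[ℝ] ℝ :=
    { toFun := fun f => (inner ℂ Ω (Φ (f : C(X, ℝ)) Ω)).re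
      map_add' := by
        intro f g
        have : ((f + g : C_c(X, ℝ)) : C(X, ℝ)) = (f : C(X, ℝ)) + (g : C(X, ℝ)) := rfl
        simp [this]
      map_smul' := by
        intro c f
        have : ((c • f : C_c(X, ℝ)) : C(X, ℝ)) = c • (f : C(X, ℝ)) := rfl
        rw [this, map_smul, smul_apply, ← Complex.coe_smul, inner_smul_right]
        simp }
  have hpos : ∀ f : C_c(X, ℝ), 0 ≤ f → 0 ≤ Λ₀ f := by
    intro f hf
    have h1 : 0 ≤ Φ (f : C(X, ℝ)) := (cfcHom_nonneg_iff hT).2 hf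
    have h2 := (ContinuousLinearMap.nonneg_iff_isPositive _).1 h1
    exact (Complex.nonneg_iff.1 (h2.inner_nonneg_right Ω)).1
  let Λ : C_c(X, ℝ) →ₚ[ℝ] ℝ := PositiveLinearMap.mk₀ Λ₀ hpos
  let ρ₀ := RealRMK.rieszMeasure Λ
  have hint : ∀ f : C(X, ℝ), ∫ x, f x ∂ρ₀ = (inner ℂ Ω (Φ f Ω)).re := by
    intro f
    let g : C_c(X, ℝ) := ⟨f, HasCompactSupport.of_compactSpace f⟩
    exact RealRMK.integral_rieszMeasure Λ g
  have hprob : IsProbabilityMeasure ρ₀ := by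
    have h := hint 1
    rw [map_one] at h
    simp [hΩ] at h
    have h' : (ρ₀ univ).toReal = 1 := by simpa [Measure.real] using h
    refine ⟨?_⟩
    rw [← ENNReal.toReal_eq_one_iff]; exact h'
  refine ⟨ρ₀.map Subtype.val, Measure.isProbabilityMeasure_map measurable_subtype_coe.aemeasurable, ?_, ?_⟩
  · rw [Measure.map_apply measurable_subtype_coe measurableSet_Icc]
    have : (Subtype.val ⁻¹' Icc (-‖T‖) ‖T‖ : Set X) = univ := by
      ext x
      have := spectrum.norm_le_norm_of_mem x.2
      rw [Real.norm_eq_abs, abs_le] at this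
      simpa using this
    rw [this, measure_univ]
  · intro z hz v hv
    have hne : ∀ x : X, z - x ≠ 0 := by
      intro x h
      have := spectrum.norm_le_norm_of_mem x.2
      rw [sub_eq_zero] at h
      rw [← h, Real.norm_eq_abs] at this
      linarith
    let f : C(X, ℝ) := ⟨fun x => (z - x)⁻¹, by
      refine Continuous.inv₀ (by fun_prop) hne⟩
    rw [integral_map measurable_subtype_coe.aemeasurable (by
      apply Measurable.aestronglyMeasurable; fun_prop)]
    have h := hint f
    refine h.trans ?_
    -- `f` inverts `z - id` on the spectrum, so `Φ f` inverts `z - T` and `Φ f Ω = v`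
    have h1 : f * (algebraMap ℝ C(X, ℝ) z - (ContinuousMap.id ℝ).restrict X) = 1 := by
      ext x
      exact inv_mul_cancel₀ (hne x)
    have h2 := congrArg Φ h1
    rw [map_mul, map_sub, map_one, AlgHomClass.commutes, cfcHom_id hT] at h2
    have h3 : Φ f Ω = v := by
      have := congrArg (fun S : H →L[ℂ] H => S v) h2
      rw [← hv]
      simpa [Algebra.algebraMap_eq_smul_one] using this
    rw [h3]

/-! ### Multiplication operators -/

/-- Multiplication by an essentially bounded function, as a bounded operator on `L²`. -/
lemma exists_mulOp {X : Type*} [MeasurableSpace X] (m : Measure X) [IsProbabilityMeasure m]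
    (f : X → ℂ) (hf : Measurable f) (C : ℝ) (hC : 0 ≤ C) (hb : ∀ᵐ x ∂m, ‖f x‖ ≤ C) :
    ∃ M : Lp ℂ 2 m →L[ℂ] Lp ℂ 2 m, ‖M‖ ≤ C ∧ ∀ g : Lp ℂ 2 m, M g =ᵐ[m] fun x => f x * g x := by
  have hmem : MemLp f ⊤ m := memLp_top_of_bound hf.aestronglyMeasurable C hb
  refine ⟨(ContinuousLinearMap.mul ℂ ℂ).holderL m ⊤ 2 2 hmem.toLp, ?_, ?_⟩
  · refine ContinuousLinearMap.opNorm_le_bound _ hC fun g => ?_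
    refine (ContinuousLinearMap.norm_holder_apply_apply_le _ _ g).trans ?_
    gcongr
    refine (mul_le_of_le_one_left (norm_nonneg _) (ContinuousLinearMap.opNorm_mul_le ℂ ℂ)).trans ?_
    rw [Lp.norm_toLp]
    refine ENNReal.toReal_le_of_le_ofReal hC ?_
    simpa using eLpNorm_le_of_ae_bound (p := ⊤) hb
  · intro g
    refine (ContinuousLinearMap.coeFn_holder _ _ g).trans ?_
    filter_upwards [hmem.coeFn_toLp] with x hx
    simp [hx]

/-- Multiplication by a bounded real function `φ` is a self-adjoint operator on `L²` whose
distribution at the constant function `1` is the law of `φ`, as read off from its resolvent `S`. -/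
lemma exists_multiplication_model {X : Type*} [MeasurableSpace X] (m : Measure X)
    [IsProbabilityMeasure m] (φ : X → ℝ) (hφ : Measurable φ) (R : ℝ) (hR : 0 ≤ R)
    (hb : ∀ᵐ x ∂m, |φ x| ≤ R) (ξ : Lp ℂ 2 m) (hξ : ξ =ᵐ[m] fun _ => (1 : ℂ)) :
    ∃ A : Lp ℂ 2 m →L[ℂ] Lp ℂ 2 m, IsSelfAdjoint A ∧ ‖A‖ ≤ R ∧
      ∀ a : ℝ, R < |a| → ∃ S : Lp ℂ 2 m →L[ℂ] Lp ℂ 2 m,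
        ((a : ℂ) • 1 - A) * S = 1 ∧
        inner ℂ ξ (S ξ) = ((∫ x, (a - φ x)⁻¹ ∂m : ℝ) : ℂ) := by
  obtain ⟨A, hA, hAe⟩ := exists_mulOp m (fun x => (φ x : ℂ)) (by fun_prop) R hR
    (by filter_upwards [hb] with x hx; simpa using hx)
  refine ⟨A, ?_, hA, ?_⟩
  · rw [ContinuousLinearMap.isSelfAdjoint_iff_isSymmetric]
    intro f g
    change inner ℂ (A f) g = inner ℂ f (A g)
    rw [L2.inner_def, L2.inner_def]
    refine integral_congr_ae ?_
    filter_upwards [hAe f, hAe g] with x h1 h2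
    simp [h1, h2]
    ring
  · intro a ha
    have hlow : ∀ᵐ x ∂m, |a| - R ≤ |a - φ x| := by
      filter_upwards [hb] with x hx
      have := abs_sub_abs_le_abs_sub a (φ x)
      linarith
    obtain ⟨S, hS, hSe⟩ := exists_mulOp m (fun x => ((a - φ x)⁻¹ : ℝ)) (by fun_prop)
      (|a| - R)⁻¹ (by rw [inv_nonneg]; linarith) (by
        filter_upwards [hlow] with x hx
        rw [Complex.norm_real, Real.norm_eq_abs, abs_inv]
        exact inv_anti₀ (by linarith) hx)
    refine ⟨S, ?_, ?_⟩
    · ext1 g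
      apply Lp.ext
      simp only [mul_apply_eq_comp, sub_apply, smul_apply, one_apply_eq_self]
      filter_upwards [hlow, hAe (S g), hSe g, Lp.coeFn_sub ((a : ℂ) • S g) (A (S g)),
        Lp.coeFn_smul (a : ℂ) (S g)] with x h0 h1 h2 h3 h4
      have hne : (a : ℂ) - φ x ≠ 0 := by
        rw [← Complex.ofReal_sub, Complex.ofReal_ne_zero, ← abs_pos]; linarith
      rw [h3, Pi.sub_apply, h4, Pi.smul_apply, h1, h2, smul_eq_mul]
      push_cast
      field_simp
    · rw [L2.inner_def, ← integral_complex_ofReal]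
      refine integral_congr_ae ?_
      filter_upwards [hSe ξ, hξ] with x h1 h2
      simp [h1, h2]

/-! ### The free product of two copies of a pointed Hilbert space -/

section FreeModel

variable {K : Type*} [NormedAddCommGroup K] [InnerProductSpace ℂ K]

/-- A unit vector extends to a Hilbert basis, indexed so that `none` gives that vector. -/
lemma exists_option_hilbertBasis [CompleteSpace K] (ξ : K) (hξ : ‖ξ‖ = 1) :
    ∃ (S : Set K) (b : HilbertBasis (Option S) ℂ K), b none = ξ := by
  classical
  have ho : Orthonormal ℂ (Subtype.val : ({ξ} : Set K) → K) := by
    refine ⟨fun i => ?_, fun i j hij => absurd (Subsingleton.elim i j) hij⟩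
    rw [show (i : K) = ξ from i.2, hξ]
  obtain ⟨w, b, hw, hb⟩ := ho.exists_hilbertBasis_extension
  have hξw : ξ ∈ w := hw rfl
  let S : Set K := w \ {ξ}
  let f : Option S → w := fun o => o.elim ⟨ξ, hξw⟩ fun s => ⟨s, s.2.1⟩
  have hinj : Function.Injective f := by
    rintro (_ | s) (_ | t) h
    · rfl
    · exact absurd (Subtype.ext_iff.1 h).symm t.2.2
    · exact absurd (Subtype.ext_iff.1 h) s.2.2
    · exact congrArg some (Subtype.ext (by simpa [f] using h))
  have hsurj : Function.Surjective f := by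
    intro x
    by_cases hx : (x : K) = ξ
    · exact ⟨none, Subtype.ext hx.symm⟩
    · exact ⟨some ⟨x, x.2, hx⟩, rfl⟩
  refine ⟨S, HilbertBasis.mk (b.orthonormal.comp f hinj) ?_, ?_⟩
  · rw [hsurj.range_comp, b.dense_span]
  · simp [f, hb]

/-- The Hilbert space `K ⊗ ℓ²(List S)`. When `K` has a Hilbert basis indexed by `Option S`, this is
the free product of two copies of `K`: the basis vector `(some s, l)` is the reduced word `s :: l`
whose first letter comes from the first copy, and `(none, l)` is the reduced word `l` whose first
letter comes from the second copy (the letters of a reduced word alternate between the two copies,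
so that the copy of the first one determines that of all the others). -/
abbrev FreeProd (S : Type*) (K : Type*) [NormedAddCommGroup K] := lp (fun _ : List S => K) 2

/-- The ampliation `X ⊗ 1` of an operator `X` on `K`. -/
noncomputable def ampl (S : Type*) (X : K →L[ℂ] K) : FreeProd S K →L[ℂ] FreeProd S K :=
  lp.mapCLM 2 (fun _ => X) (norm_nonneg X) fun _ => le_rfl

variable {S : Type*}

@[simp] lemma ampl_apply (X : K →L[ℂ] K) (f : FreeProd S K) (l : List S) :
    ampl S X f l = X (f l) := rfl

lemma norm_ampl_le (X : K →L[ℂ] K) : ‖ampl S X‖ ≤ ‖X‖ :=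
  lp.norm_mapCLM_le 2 _ _ _

lemma ampl_mul (X Y : K →L[ℂ] K) : ampl S (X * Y) = ampl S X * ampl S Y := by
  ext f l; rfl

lemma ampl_one : ampl S (1 : K →L[ℂ] K) = 1 := by
  ext f l; rfl

lemma ampl_sub (X Y : K →L[ℂ] K) : ampl S (X - Y) = ampl S X - ampl S Y := by
  ext f l; rfl

lemma ampl_smul (c : ℂ) (X : K →L[ℂ] K) : ampl S (c • X) = c • ampl S X := by
  ext f l; rfl

lemma isSelfAdjoint_ampl [CompleteSpace K] {X : K →L[ℂ] K} (hX : IsSelfAdjoint X) :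
    IsSelfAdjoint (ampl S X) := by
  rw [ContinuousLinearMap.isSelfAdjoint_iff_isSymmetric] at hX ⊢
  intro f g
  change inner ℂ (ampl S X f) g = inner ℂ f (ampl S X g)
  rw [lp.inner_eq_tsum, lp.inner_eq_tsum]
  exact tsum_congr fun l => hX (f l) (g l)

/-- The vectors supported on the reduced words whose first letter comes from the first copy: those
all of whose values are orthogonal to the distinguished vector `ξ`. -/
noncomputable def firstPart (S : Type*) (ξ : K) : Submodule ℂ (FreeProd S K) where
  carrier := {f | ∀ l, inner ℂ ξ (f l) = 0}
  add_mem' := by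
    intro f g hf hg l
    simp [hf l, hg l]
  zero_mem' := by intro l; simp
  smul_mem' := by
    intro c f hf l
    simp [hf l]

lemma mem_firstPart {ξ : K} {f : FreeProd S K} :
    f ∈ firstPart S ξ ↔ ∀ l, inner ℂ ξ (f l) = 0 := Iff.rfl

lemma isClosed_firstPart (ξ : K) : IsClosed (firstPart S ξ : Set (FreeProd S K)) := by
  have : (firstPart S ξ : Set (FreeProd S K)) =
      ⋂ l, (fun f : FreeProd S K => inner ℂ ξ (lp.evalCLM ℂ (fun _ : List S => K) 2 l f)) ⁻¹' {0} := by
    ext f; simp only [SetLike.mem_coe, mem_firstPart, mem_iInter]; rfl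
  rw [this]
  exact isClosed_iInter fun l => isClosed_singleton.preimage (by fun_prop)

open Classical in
/-- The vacuum vector, corresponding to the empty word. -/
noncomputable def vac (S : Type*) (ξ : K) : FreeProd S K := lp.single 2 [] ξ

omit [InnerProductSpace ℂ K] in
lemma norm_vac (ξ : K) : ‖vac S ξ‖ = ‖ξ‖ := by
  classical
  exact lp.norm_single (by norm_num) _ _

lemma inner_vac (ξ : K) (f : FreeProd S K) : inner ℂ (vac S ξ) f = inner ℂ ξ (f []) := by
  classical
  exact lp.inner_single_left _ _ _

lemma inner_vac_firstPart {ξ : K} {f : FreeProd S K} (hf : f ∈ firstPart S ξ) :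
    inner ℂ (vac S ξ) f = 0 := by
  rw [inner_vac]; exact hf []

lemma ampl_vac_mem {ξ : K} {X : K →L[ℂ] K} (hX : inner ℂ ξ (X ξ) = 0) :
    ampl S X (vac S ξ) ∈ firstPart S ξ := by
  classical
  intro l
  rw [ampl_apply, vac, lp.single_apply]
  by_cases h : l = []
  · subst h; simpa using hX
  · simp [h]

/-- A centred operator sends vectors whose words do not start in the first copy to vectors whose
words do. -/
lemma ampl_mem_of_multiple {ξ : K} {X : K →L[ℂ] K} (hX : inner ℂ ξ (X ξ) = 0) (f : FreeProd S K)
    (hf : ∀ l, ∃ c : ℂ, f l = c • ξ) : ampl S X f ∈ firstPart S ξ := by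
  intro l
  obtain ⟨c, hc⟩ := hf l
  rw [ampl_apply, hc, map_smul, inner_smul_right, hX, mul_zero]

open Classical in
/-- The unit vector of the reduced word encoded by `p`. Together these vectors form a Hilbert basis
of the free product. -/
noncomputable def wordVec (b : HilbertBasis (Option S) ℂ K) (p : Option S × List S) :
    FreeProd S K := lp.single 2 p.2 (b p.1)

lemma inner_wordVec (b : HilbertBasis (Option S) ℂ K) (p : Option S × List S) (f : FreeProd S K) :
    inner ℂ (wordVec b p) f = inner ℂ (b p.1) (f p.2) := by
  classical
  exact lp.inner_single_left _ _ _

lemma eq_zero_of_inner_basis (b : HilbertBasis (Option S) ℂ K) (x : K)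
    (h : ∀ i, inner ℂ (b i) x = 0) : x = 0 := by
  have h1 : b.repr x = 0 := by
    ext i; simpa [b.repr_apply_apply] using h i
  simpa using h1

lemma orthonormal_wordVec (b : HilbertBasis (Option S) ℂ K) : Orthonormal ℂ (wordVec b) := by
  classical
  rw [orthonormal_iff_ite]
  rintro ⟨i, l⟩ ⟨j, m⟩
  rw [inner_wordVec, wordVec, lp.single_apply]
  have hb := orthonormal_iff_ite.1 b.orthonormal i j
  by_cases h : l = m
  · subst h; simpa using hb
  · simp [h]

lemma wordVec_orthogonal [CompleteSpace K] (b : HilbertBasis (Option S) ℂ K) :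
    (Submodule.span ℂ (range (wordVec b)))ᗮ = ⊥ := by
  rw [Submodule.eq_bot_iff]
  intro f hf
  rw [Submodule.mem_orthogonal] at hf
  ext l
  simp only [lp.coeFn_zero, Pi.zero_apply]
  refine eq_zero_of_inner_basis b _ fun i => ?_
  have := hf _ (Submodule.subset_span ⟨(i, l), rfl⟩)
  rwa [inner_wordVec] at this

/-- Exchange of the two copies, on reduced words. -/
def swapWord : Option S × List S → Option S × List S
  | (some s, l) => (none, s :: l)
  | (none, s :: l) => (some s, l)
  | (none, []) => (none, [])

lemma swapWord_involutive : Function.Involutive (swapWord (S := S)) := by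
  rintro ⟨_ | s, _ | ⟨t, l⟩⟩ <;> rfl

/-- There is a symmetry of the free product exchanging the two copies. -/
lemma exists_wordSwap [CompleteSpace K] (b : HilbertBasis (Option S) ℂ K) :
    ∃ U : FreeProd S K →L[ℂ] FreeProd S K, IsSelfAdjoint U ∧ U * U = 1 ∧ ‖U‖ ≤ 1 ∧
      ∀ p, U (wordVec b p) = wordVec b (swapWord p) := by
  classical
  let B := HilbertBasis.mkOfOrthogonalEqBot (orthonormal_wordVec b) (wordVec_orthogonal b)
  have hB : ⇑B = wordVec b := HilbertBasis.coe_mkOfOrthogonalEqBot _ _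
  let B' := HilbertBasis.mk (B.orthonormal.comp _ swapWord_involutive.injective) (by
    rw [swapWord_involutive.surjective.range_comp, B.dense_span])
  have hB' : ⇑B' = ⇑B ∘ swapWord := HilbertBasis.coe_mk _ _
  let U₀ : FreeProd S K ≃ₗᵢ[ℂ] FreeProd S K := B.repr.trans B'.repr.symm
  have hU : ∀ p, U₀ (wordVec b p) = wordVec b (swapWord p) := by
    intro p
    rw [← hB]
    simp only [U₀, LinearIsometryEquiv.trans_apply, B.repr_self, B'.repr_symm_single, hB',
      Function.comp]
  let U : FreeProd S K →L[ℂ] FreeProd S K := U₀.toContinuousLinearEquiv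
  have hUU : U * U = 1 := by
    refine ContinuousLinearMap.ext_on (s := range (wordVec b)) ?_ ?_
    · rw [dense_iff_closure_eq, ← Submodule.topologicalClosure_coe, ← hB, B.dense_span]; rfl
    · rintro _ ⟨p, rfl⟩
      change U₀ (U₀ _) = _
      rw [hU, hU, swapWord_involutive p]; rfl
  refine ⟨U, ?_, hUU, U₀.toLinearIsometry.norm_toContinuousLinearMap_le, hU⟩
  rw [ContinuousLinearMap.isSelfAdjoint_iff_isSymmetric]
  intro f g
  have hg : U₀ (U₀ g) = g := congrArg (fun T : _ →L[ℂ] _ => T g) hUU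
  change inner ℂ (U₀ f) g = inner ℂ f (U₀ g)
  rw [← U₀.inner_map_map f, hg]

lemma swap_vac (b : HilbertBasis (Option S) ℂ K) {U : FreeProd S K →L[ℂ] FreeProd S K}
    (hU : ∀ p, U (wordVec b p) = wordVec b (swapWord p)) :
    U (vac S (b none)) = vac S (b none) := hU (none, [])

/-- The exchange maps vectors whose words start in the first copy to vectors whose words do not,
that is, whose values are all multiples of the distinguished vector. -/
lemma swap_multiple [CompleteSpace K] (b : HilbertBasis (Option S) ℂ K)
    {U : FreeProd S K →L[ℂ] FreeProd S K}
    (hsa : IsSelfAdjoint U) (hU : ∀ p, U (wordVec b p) = wordVec b (swapWord p))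
    {f : FreeProd S K} (hf : f ∈ firstPart S (b none)) (l : List S) :
    ∃ c : ℂ, U f l = c • b none := by
  classical
  refine ⟨inner ℂ (b none) (U f l), ?_⟩
  rw [← sub_eq_zero]
  refine eq_zero_of_inner_basis b _ fun i => ?_
  have hb := orthonormal_iff_ite.1 b.orthonormal
  rw [inner_sub_right, inner_smul_right, hb]
  rcases i with _ | s
  · simp
  · rw [← inner_wordVec b (some s, l)]
    have hs := (ContinuousLinearMap.isSelfAdjoint_iff_isSymmetric.1 hsa) (wordVec b (some s, l)) f
    change inner ℂ (U _) f = inner ℂ _ (U f) at hs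
    rw [← hs, hU, inner_wordVec, swapWord]
    simpa using hf (s :: l)

end FreeModel

/-! ### The resolvent of a free sum -/

/-- The resolvent identity behind additivity of the `R`-transform. The resolvents of `A` at `a` and
of `B` at `b` are `u (1 - EA)` and `u (1 - EB)`. The subspaces `N₁` and `N₂` model the vectors
supported on words that start in the first, respectively the second copy, and the mapping
properties of `EA` and `EB` express freeness. Then `v = u (1 - EB) (1 - EA EB)⁻¹ (1 - EA) Ω` is the
value at `Ω` of the resolvent of `A + B` at `a + b - u⁻¹`, and has vacuum expectation `u`. -/
lemma free_resolvent {H : Type*} [NormedAddCommGroup H] [InnerProductSpace ℂ H] [CompleteSpace H]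
    {A B EA EB : H →L[ℂ] H} {u a b : ℂ} (hu : u ≠ 0)
    (hA : (a • 1 - A) * (u • (1 - EA)) = 1) (hB : (b • 1 - B) * (u • (1 - EB)) = 1)
    {N₁ N₂ : Submodule ℂ H} (hN₁ : IsClosed (N₁ : Set H)) {Ω : H} (hΩ : ‖Ω‖ = 1)
    (hΩ₁ : ∀ h ∈ N₁, inner ℂ Ω h = 0) (hΩ₂ : ∀ h ∈ N₂, inner ℂ Ω h = 0)
    (hEA : EA Ω ∈ N₁) (hEB : EB Ω ∈ N₂) (hEA' : ∀ h ∈ N₂, EA h ∈ N₁) (hEB' : ∀ h ∈ N₁, EB h ∈ N₂)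
    (hnA : ‖EA‖ < 1) (hnB : ‖EB‖ < 1) :
    ∃ v : H, (a + b - u⁻¹) • v - (A + B) v = Ω ∧ inner ℂ Ω v = u := by
  have hP : ‖EA * EB‖ < 1 := (norm_mul_le _ _).trans_lt
    (mul_lt_one_of_nonneg_of_lt_one_left (norm_nonneg _) hnA hnB.le)
  set P := EA * EB
  set y := EA (EB Ω) - EA Ω
  have hy : y ∈ N₁ := N₁.sub_mem (hEA' _ hEB) hEA
  -- The solution `x` of `x = y + P x` is the sum of a Neumann series with all its terms in `N₁`.
  have hsum : HasSum (fun n : ℕ => P ^ n) (∑' n : ℕ, P ^ n) :=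
    (summable_geometric_of_norm_lt_one hP).hasSum
  set x := (∑' n : ℕ, P ^ n) y
  have hx : x ∈ N₁ := by
    have h1 : HasSum (fun n : ℕ => (P ^ n) y) x :=
      hsum.mapL (ContinuousLinearMap.apply ℂ H y)
    have h2 : ∀ n : ℕ, (P ^ n) y ∈ N₁ := by
      intro n
      induction n with
      | zero => simpa using hy
      | succ n ih =>
        rw [pow_succ']
        exact hEA' _ (hEB' _ ih)
    exact hN₁.mem_of_tendsto h1 (Eventually.of_forall fun s => N₁.sum_mem fun n _ => h2 n)
  have hxP : x - EA (EB x) = y :=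
    congrArg (fun T : H →L[ℂ] H => T y) (mul_neg_geom_series P hP)
  set w := Ω + x
  have hw : w - EA (EB w) = Ω - EA Ω := by
    have : w - EA (EB w) = Ω - EA (EB Ω) + (x - EA (EB x)) := by
      simp only [w, map_add]; abel
    rw [this, hxP]; simp only [y]; abel
  have hA' : ∀ h : H, a • (u • (h - EA h)) - A (u • (h - EA h)) = h := fun h =>
    congrArg (fun T : H →L[ℂ] H => T h) hA
  have hB' : b • (u • (w - EB w)) - B (u • (w - EB w)) = w :=
    congrArg (fun T : H →L[ℂ] H => T w) hB
  refine ⟨u • (w - EB w), ?_, ?_⟩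
  · have h1 : (a + b - u⁻¹) • (u • (w - EB w)) - (A + B) (u • (w - EB w)) =
        (b • (u • (w - EB w)) - B (u • (w - EB w))) +
        (a • (u • (w - EB w)) - A (u • (w - EB w))) - (w - EB w) := by
      rw [sub_smul, add_smul, inv_smul_smul₀ hu, add_apply]
      abel
    have h2 := hA' Ω
    rw [← hw] at h2
    have h3 := hA' (EB w)
    have h4 : a • (u • (w - EA (EB w))) - A (u • (w - EA (EB w))) =
        (a • (u • (w - EB w)) - A (u • (w - EB w))) +
        (a • (u • (EB w - EA (EB w))) - A (u • (EB w - EA (EB w)))) := by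
      have : w - EA (EB w) = (w - EB w) + (EB w - EA (EB w)) := by abel
      rw [this]
      simp only [smul_add, map_add]
      abel
    rw [h1, hB', ← h2, h4, h3]
    abel
  · have h1 : inner ℂ Ω (EB w) = 0 := by
      refine hΩ₂ _ ?_
      simp only [w, map_add]
      exact N₂.add_mem hEB (hEB' _ hx)
    have h2 : inner ℂ Ω w = 1 := by
      simp only [w, inner_add_right, hΩ₁ x hx, inner_self_eq_norm_sq_to_K, hΩ]
      simp
    rw [inner_smul_right, inner_sub_right, h1, h2]
    simp

/-- If the resolvent of `A` at `a` is `u (1 - E)`, with `a` close to `u⁻¹`, then `E` is a strict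
contraction: `D = u (A - (a - u⁻¹))` is small and `E = D E - D`. -/
lemma norm_centred_lt {H : Type*} [NormedAddCommGroup H] [InnerProductSpace ℂ H]
    [CompleteSpace H] {A E : H →L[ℂ] H} {u a R : ℝ} (hu : u ≠ 0)
    (huR : |u| * R ≤ 1 / 8) (ha : |a - u⁻¹| ≤ R) (hA : ‖A‖ ≤ R)
    (h : ((a : ℂ) • 1 - A) * ((u : ℂ) • (1 - E)) = 1) : ‖E‖ < 1 := by
  have hu' : (u : ℂ) ≠ 0 := Complex.ofReal_ne_zero.2 hu
  set D : H →L[ℂ] H := (u : ℂ) • (A - ((a - u⁻¹ : ℝ) : ℂ) • 1)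
  have hD : ‖D‖ ≤ 1 / 4 := by
    have h1 : ‖A - ((a - u⁻¹ : ℝ) : ℂ) • (1 : H →L[ℂ] H)‖ ≤ R + R := by
      refine (norm_sub_le _ _).trans (add_le_add hA ?_)
      rw [norm_smul, Complex.norm_real, Real.norm_eq_abs]
      refine (mul_le_of_le_one_right (abs_nonneg _) ContinuousLinearMap.norm_id_le).trans ha
    rw [norm_smul, Complex.norm_real, Real.norm_eq_abs]
    nlinarith [abs_nonneg u]
  have h1 : (u : ℂ) • ((a : ℂ) • 1 - A) = 1 - D := by
    simp only [D, smul_sub, smul_smul]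
    push_cast
    rw [mul_sub, mul_inv_cancel₀ hu', sub_smul, one_smul]
    abel
  have h2 : E = D * E - D := by
    rw [mul_smul_comm, ← smul_mul_assoc, h1] at h
    have key : (1 - D) * (1 - E) = 1 - E + (D * E - D) := by noncomm_ring
    rw [h, sub_add_eq_add_sub, eq_sub_iff_add_eq] at key
    exact add_left_cancel key
  have h3 : ‖E‖ ≤ 1 / 4 * ‖E‖ + 1 / 4 := by
    conv_lhs => rw [h2]
    refine (norm_sub_le _ _).trans (add_le_add ((norm_mul_le _ _).trans ?_) hD)
    gcongr
  linarith

lemma eight_mul_le_abs_inv {u R : ℝ} (hu : u ≠ 0) (hR : 0 < R) (huR : |u| * R ≤ 1 / 8) :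
    8 * R ≤ |u⁻¹| := by
  rw [abs_inv, le_inv_comm₀ (by positivity) (by positivity), inv_eq_one_div,
    le_div_iff₀ (by positivity)]
  linarith

lemma lt_abs_of_abs_sub_inv_le {u t R : ℝ} (hu : u ≠ 0) (hR : 0 < R) (huR : |u| * R ≤ 1 / 8)
    (ht : |t - u⁻¹| ≤ R) : R < |t| := by
  have huinv := eight_mul_le_abs_inv hu hR huR
  have := abs_sub_abs_le_abs_sub u⁻¹ t
  rw [abs_sub_comm] at this
  linarith

/-- Two self-adjoint operators on `K`, made free by letting them act on a free product from
different copies of `K`: additivity for the spectral measure of their sum at the vacuum. -/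
lemma exists_free_sum {K : Type*} [NormedAddCommGroup K] [InnerProductSpace ℂ K] [CompleteSpace K]
    (ξ : K) (hξ : ‖ξ‖ = 1) (A₀ B₀ : K →L[ℂ] K) (hA₀ : IsSelfAdjoint A₀) (hB₀ : IsSelfAdjoint B₀)
    {R : ℝ} (hR : 0 < R) (hA₀n : ‖A₀‖ ≤ R) (hB₀n : ‖B₀‖ ≤ R) :
    ∃ ρ : Measure ℝ, IsProbabilityMeasure ρ ∧ ρ (Icc (-(2 * R)) (2 * R)) = 1 ∧
      ∀ u a b : ℝ, u ≠ 0 → |u| * R ≤ 1 / 8 → |a - u⁻¹| ≤ R → |b - u⁻¹| ≤ R →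
        (∃ T : K →L[ℂ] K, ((a : ℂ) • 1 - A₀) * T = 1 ∧ inner ℂ ξ (T ξ) = (u : ℂ)) →
        (∃ T : K →L[ℂ] K, ((b : ℂ) • 1 - B₀) * T = 1 ∧ inner ℂ ξ (T ξ) = (u : ℂ)) →
        ∫ x, (a + b - u⁻¹ - x)⁻¹ ∂ρ = u := by
  obtain ⟨S, e, he⟩ := exists_option_hilbertBasis ξ hξ
  obtain ⟨U, hU, hUU, hUn, hUe⟩ := exists_wordSwap e
  have hUU' : ∀ h, U (U h) = h := fun h => congrArg (fun T : _ →L[ℂ] _ => T h) hUU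
  have hUadj : ∀ f g, inner ℂ (U f) g = inner ℂ f (U g) := fun f g =>
    ContinuousLinearMap.isSelfAdjoint_iff_isSymmetric.1 hU f g
  set Ω := vac S ξ
  have hUΩ : U Ω = Ω := by have := swap_vac e hUe; rwa [he] at this
  have hΩ : ‖Ω‖ = 1 := (norm_vac ξ).trans hξ
  set N := firstPart S ξ
  have hmult : ∀ X : K →L[ℂ] K, inner ℂ ξ (X ξ) = 0 →
      ∀ h ∈ N, ampl S X (U h) ∈ N := by
    intro X hX h hh
    refine ampl_mem_of_multiple hX _ fun l => ?_
    rw [← he]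
    exact swap_multiple e hU hUe (by rwa [he]) l
  set A := ampl S A₀
  set B := U * ampl S B₀ * U
  have hAn : ‖A‖ ≤ R := (norm_ampl_le A₀).trans hA₀n
  have hconj : ∀ X, ‖U * X * U‖ ≤ ‖X‖ := by
    intro X
    calc ‖U * X * U‖ ≤ ‖U‖ * ‖X‖ * ‖U‖ := (norm_mul_le _ _).trans (by gcongr; exact norm_mul_le _ _)
      _ ≤ 1 * ‖X‖ * 1 := by gcongr
      _ = ‖X‖ := by ring
  have hBn : ‖B‖ ≤ R := (hconj _).trans ((norm_ampl_le B₀).trans hB₀n)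
  have hBsa : IsSelfAdjoint B := by
    have h1 : star (ampl S B₀) = ampl S B₀ := isSelfAdjoint_ampl hB₀
    have h2 : star U = U := hU
    change star (U * ampl S B₀ * U) = U * ampl S B₀ * U
    rw [star_mul, star_mul, h1, h2, mul_assoc]
  obtain ⟨ρ, hρ, hρK, hρr⟩ := exists_spectral_measure (A + B)
    ((isSelfAdjoint_ampl hA₀).add hBsa) Ω hΩ
  have hTn : ‖A + B‖ ≤ 2 * R := (norm_add_le _ _).trans (by linarith)
  refine ⟨ρ, hρ, ?_, ?_⟩
  · refine le_antisymm prob_le_one ?_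
    rw [← hρK]
    exact measure_mono (Icc_subset_Icc (by linarith) hTn)
  intro u a b hu huR ha hb hTA hTB
  have hu' : (u : ℂ) ≠ 0 := Complex.ofReal_ne_zero.2 hu
  have huinv := eight_mul_le_abs_inv hu hR huR
  -- The centred operator attached to a resolvent with vacuum expectation `u`.
  have hcent : ∀ (X₀ : K →L[ℂ] K) (t : ℝ),
      (∃ T : K →L[ℂ] K, ((t : ℂ) • 1 - X₀) * T = 1 ∧ inner ℂ ξ (T ξ) = (u : ℂ)) →
      ∃ E : K →L[ℂ] K, inner ℂ ξ (E ξ) = 0 ∧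
        ((t : ℂ) • 1 - ampl S X₀) * ((u : ℂ) • (1 - ampl S E)) = 1 := by
    rintro X₀ t ⟨T, hT, hTξ⟩
    refine ⟨1 - (u : ℂ)⁻¹ • T, ?_, ?_⟩
    · simp only [sub_apply, smul_apply, one_apply_eq_self, inner_sub_right, inner_smul_right, hTξ,
        inv_mul_cancel₀ hu', inner_self_eq_norm_sq_to_K, hξ]
      simp
    · rw [ampl_sub, ampl_one, ampl_smul, sub_sub_cancel, smul_smul, mul_inv_cancel₀ hu', one_smul,
        ← ampl_one, ← ampl_smul, ← ampl_sub, ← ampl_mul, hT]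
  obtain ⟨EA, hEA, hEAr⟩ := hcent A₀ a hTA
  obtain ⟨EB, hEB, hEBr⟩ := hcent B₀ b hTB
  have hEBr' : ((b : ℂ) • 1 - B) * ((u : ℂ) • (1 - U * ampl S EB * U)) = 1 := by
    have h1 : (b : ℂ) • 1 - B = U * ((b : ℂ) • 1 - ampl S B₀) * U := by
      simp only [mul_sub, sub_mul, mul_smul_comm, smul_mul_assoc, mul_one, hUU, B]
    have h2 : (u : ℂ) • (1 - U * ampl S EB * U) = U * ((u : ℂ) • (1 - ampl S EB)) * U := by
      simp only [mul_sub, sub_mul, mul_smul_comm, smul_mul_assoc, mul_one, hUU]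
    rw [h1, h2]
    calc U * ((b : ℂ) • 1 - ampl S B₀) * U * (U * ((u : ℂ) • (1 - ampl S EB)) * U)
        = U * ((b : ℂ) • 1 - ampl S B₀) * (U * U) * ((u : ℂ) • (1 - ampl S EB)) * U := by
          simp only [mul_assoc]
      _ = U * (((b : ℂ) • 1 - ampl S B₀) * ((u : ℂ) • (1 - ampl S EB))) * U := by
          rw [hUU, mul_one]; simp only [mul_assoc]
      _ = 1 := by rw [hEBr, mul_one, hUU]
  have hΩU : ∀ h, inner ℂ Ω (U h) = inner ℂ Ω h := by
    intro h; rw [← hUadj, hUΩ]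
  obtain ⟨v, hv, hvu⟩ := free_resolvent (N₁ := N) (N₂ := N.comap (U : _ →ₗ[ℂ] _)) hu' hEAr hEBr'
    (isClosed_firstPart ξ) hΩ (fun h hh => inner_vac_firstPart hh)
    (fun h hh => by rw [← hΩU]; exact inner_vac_firstPart hh)
    (ampl_vac_mem hEA)
    (by
      change U (U (ampl S EB (U Ω))) ∈ N
      rw [hUU', hUΩ]; exact ampl_vac_mem hEB)
    (fun h hh => by
      have := hmult EA hEA _ hh
      change ampl S EA (U (U h)) ∈ N at this
      rwa [hUU'] at this)
    (fun h hh => by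
      change U (U (ampl S EB (U h))) ∈ N
      rw [hUU']; exact hmult EB hEB h hh)
    (norm_centred_lt hu huR ha hAn hEAr) (norm_centred_lt hu huR hb hBn hEBr')
  have hz : ‖A + B‖ < |a + b - u⁻¹| := by
    have h1 : u⁻¹ = (a + b - u⁻¹) - (a - u⁻¹) - (b - u⁻¹) := by ring
    have h2 : |u⁻¹| ≤ |a + b - u⁻¹| + |a - u⁻¹| + |b - u⁻¹| := by
      conv_lhs => rw [h1]
      refine (abs_sub _ _).trans ?_
      gcongr
      exact abs_sub _ _
    linarith
  rw [hρr _ hz v (by push_cast; exact hv), hvu, Complex.ofReal_re]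

/-- Existence of the free additive convolution, in terms of preimages `a` and `b` of `u` under the
transforms `z ↦ ∫ (z - x)⁻¹`. -/
theorem exists_free_convolution (μ ν : Measure ℝ) [IsProbabilityMeasure μ]
    [IsProbabilityMeasure ν] {R : ℝ} (hR : 0 < R) (hμ : ∀ᵐ x ∂μ, |x| ≤ R) (hν : ∀ᵐ x ∂ν, |x| ≤ R) :
    ∃ ρ : Measure ℝ, IsProbabilityMeasure ρ ∧ ρ (Icc (-(2 * R)) (2 * R)) = 1 ∧
      ∀ u a b : ℝ, u ≠ 0 → |u| * R ≤ 1 / 8 → |a - u⁻¹| ≤ R → |b - u⁻¹| ≤ R →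
        ∫ x, (a - x)⁻¹ ∂μ = u → ∫ x, (b - x)⁻¹ ∂ν = u →
        ∫ x, (a + b - u⁻¹ - x)⁻¹ ∂ρ = u := by
  set m := μ.prod ν
  have hξm : MemLp (fun _ : ℝ × ℝ => (1 : ℂ)) 2 m := memLp_const 1
  set ξ : Lp ℂ 2 m := hξm.toLp
  have hξae : ξ =ᵐ[m] fun _ => (1 : ℂ) := hξm.coeFn_toLp
  have hξ : ‖ξ‖ = 1 := by
    have h1 : inner ℂ ξ ξ = (1 : ℂ) := by
      rw [L2.inner_def]
      have : ∀ᵐ x ∂m, inner ℂ (ξ x) (ξ x) = (1 : ℂ) := by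
        filter_upwards [hξae] with x hx
        simp [hx]
      rw [integral_congr_ae this]
      simp
    rw [norm_eq_sqrt_re_inner (𝕜 := ℂ), h1]
    simp
  obtain ⟨A₀, hA₀, hA₀n, hA₀r⟩ := exists_multiplication_model m Prod.fst measurable_fst R hR.le
    (measurePreserving_fst.quasiMeasurePreserving.ae hμ) ξ hξae
  obtain ⟨B₀, hB₀, hB₀n, hB₀r⟩ := exists_multiplication_model m Prod.snd measurable_snd R hR.le
    (measurePreserving_snd.quasiMeasurePreserving.ae hν) ξ hξae
  obtain ⟨ρ, hρ, hρK, hρr⟩ := exists_free_sum ξ hξ A₀ B₀ hA₀ hB₀ hR hA₀n hB₀n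
  refine ⟨ρ, hρ, hρK, fun u a b hu huR ha hb hau hbu => hρr u a b hu huR ha hb ?_ ?_⟩
  · obtain ⟨T, hT, hTξ⟩ := hA₀r a (lt_abs_of_abs_sub_inv_le hu hR huR ha)
    refine ⟨T, hT, hTξ.trans ?_⟩
    rw [integral_fun_fst (fun x : ℝ => (a - x)⁻¹), hau]; simp
  · obtain ⟨T, hT, hTξ⟩ := hB₀r b (lt_abs_of_abs_sub_inv_le hu hR huR hb)
    refine ⟨T, hT, hTξ.trans ?_⟩
    rw [integral_fun_snd (fun x : ℝ => (b - x)⁻¹), hbu]; simp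

/-! ### The Stieltjes transform near infinity -/

lemma integral_pos_of_ae_pos {μ : Measure ℝ} [IsProbabilityMeasure μ] {f : ℝ → ℝ}
    (hf : Integrable f μ) (h : ∀ᵐ x ∂μ, 0 < f x) : 0 < ∫ x, f x ∂μ := by
  have h0 : 0 ≤ᵐ[μ] f := h.mono fun x hx => hx.le
  refine lt_of_le_of_ne (integral_nonneg_of_ae h0) fun h1 => ?_
  have h2 := (integral_eq_zero_iff_of_nonneg_ae h0 hf).1 h1.symm
  obtain ⟨x, hx, hx'⟩ := (h.and h2).exists
  exact hx.ne' hx'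

lemma integrable_inv_sub {μ : Measure ℝ} [IsProbabilityMeasure μ] {z δ : ℝ} (hδ : 0 < δ)
    (h : ∀ᵐ x ∂μ, δ ≤ |x - z|) : Integrable (fun x => (x - z)⁻¹) μ := by
  refine Integrable.of_bound (C := δ⁻¹) (by fun_prop) ?_
  filter_upwards [h] with x hx
  rw [norm_inv, Real.norm_eq_abs]
  exact inv_anti₀ hδ hx

lemma msupp_eq_support (μ : Measure ℝ) : msupp μ = μ.support := by
  ext x
  simp [msupp, Measure.mem_support_iff_forall, pos_iff_ne_zero]

section Bounded

variable {μ : Measure ℝ} [IsProbabilityMeasure μ] {R : ℝ}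

omit [IsProbabilityMeasure μ] in
lemma msupp_subset (h : ∀ᵐ x ∂μ, |x| ≤ R) : msupp μ ⊆ Icc (-R) R := by
  rw [msupp_eq_support]
  refine Measure.support_subset_of_isClosed isClosed_Icc ?_
  filter_upwards [h] with x hx using abs_le.1 hx

lemma neg_le_aInf (h : ∀ᵐ x ∂μ, |x| ≤ R) : -R ≤ aInf μ := by
  refine le_csInf ?_ fun x hx => (msupp_subset h hx).1
  rw [msupp_eq_support]
  exact Measure.nonempty_support (IsProbabilityMeasure.ne_zero μ)

lemma bSup_le (h : ∀ᵐ x ∂μ, |x| ≤ R) : bSup μ ≤ R := by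
  refine csSup_le ?_ fun x hx => (msupp_subset h hx).2
  rw [msupp_eq_support]
  exact Measure.nonempty_support (IsProbabilityMeasure.ne_zero μ)

omit [IsProbabilityMeasure μ] in
lemma ae_aInf_le (h : ∀ᵐ x ∂μ, |x| ≤ R) : ∀ᵐ x ∂μ, aInf μ ≤ x := by
  filter_upwards [Measure.support_mem_ae (μ := μ)] with x hx
  rw [← msupp_eq_support] at hx
  exact csInf_le ⟨-R, fun y hy => (msupp_subset h hy).1⟩ hx

omit [IsProbabilityMeasure μ] in
lemma ae_le_bSup (h : ∀ᵐ x ∂μ, |x| ≤ R) : ∀ᵐ x ∂μ, x ≤ bSup μ := by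
  filter_upwards [Measure.support_mem_ae (μ := μ)] with x hx
  rw [← msupp_eq_support] at hx
  exact le_csSup ⟨R, fun y hy => (msupp_subset h hy).2⟩ hx

lemma integrable_left (h : ∀ᵐ x ∂μ, |x| ≤ R) {z : ℝ} (hz : z < aInf μ) :
    Integrable (fun x => (x - z)⁻¹) μ := by
  refine integrable_inv_sub (sub_pos.2 hz) ?_
  filter_upwards [ae_aInf_le h] with x hx
  rw [abs_of_pos] <;> linarith

lemma integrable_right (h : ∀ᵐ x ∂μ, |x| ≤ R) {z : ℝ} (hz : bSup μ < z) :
    Integrable (fun x => (x - z)⁻¹) μ := by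
  refine integrable_inv_sub (sub_pos.2 hz) ?_
  filter_upwards [ae_le_bSup h] with x hx
  rw [abs_of_neg] <;> linarith

lemma Gst_pos_left (h : ∀ᵐ x ∂μ, |x| ≤ R) {z : ℝ} (hz : z < aInf μ) : 0 < Gst μ z := by
  refine integral_pos_of_ae_pos (integrable_left h hz) ?_
  filter_upwards [ae_aInf_le h] with x hx
  exact inv_pos.2 (by linarith)

lemma Gst_neg_right (h : ∀ᵐ x ∂μ, |x| ≤ R) {z : ℝ} (hz : bSup μ < z) : Gst μ z < 0 := by
  have : 0 < ∫ x, -(x - z)⁻¹ ∂μ := by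
    refine integral_pos_of_ae_pos (integrable_right h hz).neg ?_
    filter_upwards [ae_le_bSup h] with x hx
    exact neg_pos.2 (inv_lt_zero.2 (by linarith))
  rw [integral_neg] at this
  exact neg_pos.1 this

lemma Gst_lt_left (h : ∀ᵐ x ∂μ, |x| ≤ R) {z w : ℝ} (hzw : z < w) (hw : w < aInf μ) :
    Gst μ z < Gst μ w := by
  have i1 := integrable_left h (hzw.trans hw)
  have i2 := integrable_left h hw
  have : 0 < ∫ x, ((x - w)⁻¹ - (x - z)⁻¹) ∂μ := by
    refine integral_pos_of_ae_pos (i2.sub i1) ?_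
    filter_upwards [ae_aInf_le h] with x hx
    exact sub_pos.2 (inv_strictAnti₀ (by linarith) (by linarith))
  rw [integral_sub i2 i1] at this
  exact sub_pos.1 this

lemma Gst_lt_right (h : ∀ᵐ x ∂μ, |x| ≤ R) {z w : ℝ} (hzw : z < w) (hz : bSup μ < z) :
    Gst μ z < Gst μ w := by
  have i1 := integrable_right h hz
  have i2 := integrable_right h (hz.trans hzw)
  have : 0 < ∫ x, ((x - w)⁻¹ - (x - z)⁻¹) ∂μ := by
    refine integral_pos_of_ae_pos (i2.sub i1) ?_
    filter_upwards [ae_le_bSup h] with x hx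
    have h1 : (z - x)⁻¹ > (w - x)⁻¹ := inv_strictAnti₀ (by linarith) (by linarith)
    rw [← neg_sub w x, ← neg_sub z x, inv_neg, inv_neg]
    linarith
  rw [integral_sub i2 i1] at this
  exact sub_pos.1 this

lemma Gst_injOn (h : ∀ᵐ x ∂μ, |x| ≤ R) :
    InjOn (Gst μ) (Iio (aInf μ) ∪ Ioi (bSup μ)) := by
  intro z hz w hw hzw
  rcases hz with hz | hz <;> rcases hw with hw | hw
  · rcases lt_trichotomy z w with hlt | heq | hlt
    · exact absurd hzw (Gst_lt_left h hlt hw).ne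
    · exact heq
    · exact absurd hzw (Gst_lt_left h hlt hz).ne'
  · exact absurd hzw ((Gst_neg_right h hw).trans (Gst_pos_left h hz)).ne'
  · exact absurd hzw ((Gst_neg_right h hz).trans (Gst_pos_left h hw)).ne
  · rcases lt_trichotomy z w with hlt | heq | hlt
    · exact absurd hzw (Gst_lt_right h hlt hz).ne
    · exact heq
    · exact absurd hzw (Gst_lt_right h hlt hw).ne'

/-- The inverse returns any preimage lying outside `[-R, R]`, since such a point is off the convex
hull of the support. -/
lemma Ginv_eq (h : ∀ᵐ x ∂μ, |x| ≤ R) {z g : ℝ} (hz : R < |z|) (hg : Gst μ z = g) :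
    Ginv μ g = z := by
  have hmem : z ∈ Iio (aInf μ) ∪ Ioi (bSup μ) := by
    have h1 := neg_le_aInf h
    have h2 := bSup_le h
    rcases lt_abs.1 hz with hz | hz
    · exact Or.inr (show bSup μ < z by linarith)
    · exact Or.inl (show z < aInf μ by linarith)
  have hex : ∃ w ∈ Iio (aInf μ) ∪ Ioi (bSup μ), Gst μ w = g := ⟨z, hmem, hg⟩
  exact Gst_injOn h (Function.invFunOn_mem hex) hmem
    ((Function.invFunOn_eq hex).trans hg.symm)

lemma inv_le_inv_of_mul_pos {s t : ℝ} (hst : s ≤ t) (h : 0 < s * t) : t⁻¹ ≤ s⁻¹ := by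
  have hs : s ≠ 0 := left_ne_zero_of_mul h.ne'
  have ht : t ≠ 0 := right_ne_zero_of_mul h.ne'
  have : s⁻¹ - t⁻¹ = (t - s) / (s * t) := by field_simp
  have : 0 ≤ s⁻¹ - t⁻¹ := this ▸ div_nonneg (by linarith) h.le
  linarith

/-- Every small nonzero `-u` is a value of the Stieltjes transform, attained at a point within
distance `R` of `u⁻¹`. -/
lemma exists_Gst_eq (hR : 0 < R) (h : ∀ᵐ x ∂μ, |x| ≤ R) {u : ℝ} (hu : u ≠ 0)
    (huR : |u| * R ≤ 1 / 8) : ∃ z, |z - u⁻¹| ≤ R ∧ Gst μ z = -u := by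
  have h8 := eight_mul_le_abs_inv hu hR huR
  -- `z - x` stays within `2 * R` of `u⁻¹`, hence away from `0` and of the sign of `u`
  have hfar : ∀ z x : ℝ, |z - u⁻¹| ≤ R → |x| ≤ R → R ≤ |x - z| := by
    intro z x hz hx
    have e : u⁻¹ = -(z - u⁻¹) + x - (x - z) := by ring
    have : |u⁻¹| ≤ |z - u⁻¹| + |x| + |x - z| := by
      calc |u⁻¹| = |-(z - u⁻¹) + x - (x - z)| := by rw [← e]
        _ ≤ |-(z - u⁻¹) + x| + |x - z| := abs_sub _ _
        _ ≤ _ := by gcongr; rw [← abs_neg (z - u⁻¹)]; exact abs_add_le _ _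
    linarith
  have hsign : ∀ z x : ℝ, |z - u⁻¹| ≤ R → |x| ≤ R → 0 < (z - x) * u⁻¹ := by
    intro z x hz hx
    rw [abs_le] at hz hx
    rcases le_abs.1 h8 with h8 | h8
    · exact mul_pos (by linarith) (by linarith)
    · exact mul_pos_of_neg_of_neg (by linarith) (by linarith)
  have hcont : ContinuousOn (fun z => ∫ x, (x - z)⁻¹ ∂μ) (Icc (u⁻¹ - R) (u⁻¹ + R)) := by
    refine continuousOn_of_dominated (bound := fun _ => R⁻¹)
      (fun z _ => by apply Measurable.aestronglyMeasurable; fun_prop) ?_ (integrable_const _) ?_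
    · intro z hz
      filter_upwards [h] with x hx
      rw [norm_inv, Real.norm_eq_abs]
      exact inv_anti₀ hR (hfar z x (abs_le.2 ⟨by linarith [hz.1], by linarith [hz.2]⟩) hx)
    · filter_upwards [h] with x hx
      refine ContinuousOn.inv₀ (by fun_prop) fun z hz => ?_
      have := hfar z x (abs_le.2 ⟨by linarith [hz.1], by linarith [hz.2]⟩) hx
      exact abs_pos.1 (hR.trans_le this)
  have hint : ∀ z, |z - u⁻¹| ≤ R → Integrable (fun x => (x - z)⁻¹) μ := fun z hz =>
    integrable_inv_sub hR (h.mono fun x hx => hfar z x hz hx)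
  have ha : |u⁻¹ - R - u⁻¹| ≤ R := by rw [show u⁻¹ - R - u⁻¹ = -R by ring, abs_neg, abs_of_pos hR]
  have hb : |u⁻¹ + R - u⁻¹| ≤ R := by rw [add_sub_cancel_left, abs_of_pos hR]
  have h1 : Gst μ (u⁻¹ - R) ≤ -u := by
    have : ∫ x, (x - (u⁻¹ - R))⁻¹ ∂μ ≤ ∫ x, -u ∂μ := by
      refine integral_mono_ae (hint _ ha) (integrable_const _) ?_
      filter_upwards [h] with x hx
      have := inv_le_inv_of_mul_pos (by linarith [(abs_le.1 hx).1]) (hsign _ x ha hx)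
      rw [inv_inv] at this
      rw [← neg_sub (u⁻¹ - R) x, inv_neg]
      exact neg_le_neg this
    simpa [Gst] using this
  have h2 : -u ≤ Gst μ (u⁻¹ + R) := by
    have : ∫ x, -u ∂μ ≤ ∫ x, (x - (u⁻¹ + R))⁻¹ ∂μ := by
      refine integral_mono_ae (integrable_const _) (hint _ hb) ?_
      filter_upwards [h] with x hx
      have := inv_le_inv_of_mul_pos (s := u⁻¹) (by linarith [(abs_le.1 hx).2])
        (mul_comm _ u⁻¹ ▸ hsign _ x hb hx)
      rw [inv_inv] at this
      rw [← neg_sub (u⁻¹ + R) x, inv_neg]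
      exact neg_le_neg this
    simpa [Gst] using this
  obtain ⟨z, hz, hzu⟩ := intermediate_value_Icc (by linarith) hcont ⟨h1, h2⟩
  exact ⟨z, abs_le.2 ⟨by linarith [hz.1], by linarith [hz.2]⟩, hzu⟩

lemma Ginv_spec (hR : 0 < R) (h : ∀ᵐ x ∂μ, |x| ≤ R) {u : ℝ} (hu : u ≠ 0)
    (huR : |u| * R ≤ 1 / 8) : |Ginv μ (-u) - u⁻¹| ≤ R ∧ Gst μ (Ginv μ (-u)) = -u := by
  obtain ⟨z, hz, hzu⟩ := exists_Gst_eq hR h hu huR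
  rw [Ginv_eq h (lt_abs_of_abs_sub_inv_le hu hR huR hz) hzu]
  exact ⟨hz, hzu⟩

lemma mem_Dhat (hR : 0 < R) (h : ∀ᵐ x ∂μ, |x| ≤ R) {u : ℝ} (hu : u ≠ 0)
    (huR : |u| * R ≤ 1 / 16) : u ∈ Dhat μ := by
  -- the values `± 2|u|` are attained on the two half-lines
  have hu0 : 0 < |u| := abs_pos.2 hu
  have hv : (0 : ℝ) < 2 * |u| := by positivity
  have hab : |(2 * |u|)| = 2 * |u| := abs_of_pos hv
  obtain ⟨z, hz, hzu⟩ := exists_Gst_eq hR h hv.ne' (by rw [hab]; linarith)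
  obtain ⟨w, hw, hwu⟩ := exists_Gst_eq hR h (u := -(2 * |u|)) (neg_ne_zero.2 hv.ne')
    (by rw [abs_neg, hab]; linarith)
  have hz' := lt_abs_of_abs_sub_inv_le hv.ne' hR (by rw [hab]; linarith) hz
  have hw' := lt_abs_of_abs_sub_inv_le (neg_ne_zero.2 hv.ne') hR
    (by rw [abs_neg, hab]; linarith) hw
  have h1 := neg_le_aInf h
  have h2 := bSup_le h
  have hzmem : bSup μ < z := by
    rcases lt_abs.1 hz' with hz' | hz'
    · linarith
    · have := Gst_pos_left h (show z < aInf μ by linarith)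
      linarith
  have hwmem : w < aInf μ := by
    rcases lt_abs.1 hw' with hw' | hw'
    · have := Gst_neg_right h (show bSup μ < w by linarith)
      linarith
    · linarith
  have hb : GbInf μ ≤ ((-(2 * |u|) : ℝ) : EReal) := hzu ▸ sInf_le ⟨z, hzmem, rfl⟩
  have ha : ((2 * |u| : ℝ) : EReal) ≤ GaSup μ := by
    rw [neg_neg] at hwu
    exact hwu ▸ le_sSup ⟨w, hwmem, rfl⟩
  constructor
  · refine (EReal.neg_le_neg_iff.2 ha).trans_lt ?_
    rw [← EReal.coe_neg, EReal.coe_lt_coe_iff]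
    linarith [neg_abs_le u]
  · refine lt_of_lt_of_le ?_ (EReal.neg_le_neg_iff.2 hb)
    rw [← EReal.coe_neg, EReal.coe_lt_coe_iff]
    linarith [le_abs_self u]

end Bounded

/-! ### Uniqueness through moments -/

section Uniqueness

variable {μ ν : Measure ℝ} [IsProbabilityMeasure μ] [IsProbabilityMeasure ν] {R : ℝ}

lemma integrable_continuous (h : ∀ᵐ x ∂μ, |x| ≤ R) {f : ℝ → ℝ} (hf : Continuous f) :
    Integrable f μ := by
  obtain ⟨C, hC⟩ := (isCompact_Icc (a := -R) (b := R)).exists_bound_of_continuousOn hf.continuousOn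
  refine Integrable.of_bound (C := C) hf.aestronglyMeasurable ?_
  filter_upwards [h] with x hx using hC x (abs_le.1 hx)

/-- The moment generating series converges to a function which is, up to a factor, the Stieltjes
transform at `w⁻¹` (see `Gst_inv`). -/
lemma hasSum_moments (hR : 0 ≤ R) (h : ∀ᵐ x ∂μ, |x| ≤ R) {w : ℝ} (hw : |w| * R < 1) :
    HasSum (fun n : ℕ => w ^ n * ∫ x, x ^ n ∂μ) (∫ x, (1 - w * x)⁻¹ ∂μ) := by
  have hs : Summable fun n : ℕ => (|w| * R) ^ n :=
    summable_geometric_of_lt_one (by positivity) hw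
  have := hasSum_integral_of_dominated_convergence (μ := μ) (F := fun (n : ℕ) x => (w * x) ^ n)
    (f := fun x => (1 - w * x)⁻¹) (fun n _ => (|w| * R) ^ n)
    (fun n => by apply Measurable.aestronglyMeasurable; fun_prop) ?_ (ae_of_all _ fun _ => hs)
    (integrable_const _) ?_
  · simpa [mul_pow, integral_const_mul] using this
  · intro n
    filter_upwards [h] with x hx
    rw [norm_pow, norm_mul, Real.norm_eq_abs, Real.norm_eq_abs]
    gcongr
  · filter_upwards [h] with x hx
    refine hasSum_geometric_of_norm_lt_one ?_
    rw [norm_mul, Real.norm_eq_abs, Real.norm_eq_abs]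
    exact lt_of_le_of_lt (by gcongr) hw

omit [IsProbabilityMeasure μ] in
lemma Gst_inv {w : ℝ} (hw : w ≠ 0) : Gst μ w⁻¹ = -w * ∫ x, (1 - w * x)⁻¹ ∂μ := by
  rw [Gst, ← integral_const_mul]
  congr 1
  ext x
  rw [show x - w⁻¹ = (-w)⁻¹ * (1 - w * x) by field_simp; ring, mul_inv, inv_inv]

/-- Measures whose Stieltjes transforms agree near infinity have the same moments, by uniqueness of
the coefficients of a power series. -/
lemma moments_eq (hR : 0 < R) (hμ : ∀ᵐ x ∂μ, |x| ≤ R) (hν : ∀ᵐ x ∂ν, |x| ≤ R) {M : ℝ}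
    (hM : 0 < M) (h : ∀ z, M < |z| → Gst μ z = Gst ν z) (n : ℕ) :
    ∫ x, x ^ n ∂μ = ∫ x, x ^ n ∂ν := by
  have key : HasFPowerSeriesAt (0 : ℝ → ℝ) (FormalMultilinearSeries.ofScalars ℝ
      fun n : ℕ => ∫ x, x ^ n ∂μ - ∫ x, x ^ n ∂ν) (0 : ℝ) := by
    rw [hasFPowerSeriesAt_iff]
    have h1 : ∀ᶠ w : ℝ in nhds 0, |w| * R < 1 := by
      refine ContinuousAt.eventually_lt (by fun_prop) (by fun_prop) (by simp)
    have h2 : ∀ᶠ w : ℝ in nhds 0, |w| * M < 1 := by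
      refine ContinuousAt.eventually_lt (by fun_prop) (by fun_prop) (by simp)
    filter_upwards [h1, h2] with w hw1 hw2
    have e : ∫ x, (1 - w * x)⁻¹ ∂μ = ∫ x, (1 - w * x)⁻¹ ∂ν := by
      rcases eq_or_ne w 0 with rfl | hw
      · simp
      · have hz : M < |w⁻¹| := by
          rw [abs_inv, lt_inv_comm₀ hM (abs_pos.2 hw), inv_eq_one_div, lt_div_iff₀ hM]
          exact hw2
        have := h _ hz
        rw [Gst_inv hw, Gst_inv hw] at this
        exact mul_left_cancel₀ (neg_ne_zero.2 hw) this
    have := (hasSum_moments hR.le hμ hw1).sub (hasSum_moments hR.le hν hw1)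
    rw [e, sub_self] at this
    simpa only [FormalMultilinearSeries.coeff_ofScalars, smul_eq_mul, mul_sub, Pi.zero_apply]
      using this
  have := congrArg (fun p => FormalMultilinearSeries.coeff p n) key.eq_zero
  simp only [FormalMultilinearSeries.coeff_ofScalars] at this
  exact sub_eq_zero.1 (this.trans (by simp [FormalMultilinearSeries.coeff]))

/-- A compactly supported measure is determined by its moments, by Weierstrass approximation. -/
lemma eq_of_moments (hμ : ∀ᵐ x ∂μ, |x| ≤ R) (hν : ∀ᵐ x ∂ν, |x| ≤ R)
    (h : ∀ n : ℕ, ∫ x, x ^ n ∂μ = ∫ x, x ^ n ∂ν) : μ = ν := by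
  have hpoly : ∀ p : Polynomial ℝ, ∫ x, p.eval x ∂μ = ∫ x, p.eval x ∂ν := by
    intro p
    induction p using Polynomial.induction_on' with
    | add p q hp hq =>
      simp only [Polynomial.eval_add]
      rw [integral_add (integrable_continuous hμ p.continuous)
        (integrable_continuous hμ q.continuous), integral_add (integrable_continuous hν p.continuous)
        (integrable_continuous hν q.continuous), hp, hq]
    | monomial n a =>
      simp only [Polynomial.eval_monomial, integral_const_mul, h]
  refine ext_of_forall_integral_eq_of_IsFiniteMeasure fun f => ?_
  refine eq_of_forall_dist_le fun ε hε => ?_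
  obtain ⟨p, hp⟩ := exists_polynomial_near_of_continuousOn (-R) R f f.continuous.continuousOn
    (ε / 2) (by positivity)
  have close : ∀ (κ : Measure ℝ) [IsProbabilityMeasure κ], (∀ᵐ x ∂κ, |x| ≤ R) →
      dist (∫ x, p.eval x ∂κ) (∫ x, f x ∂κ) ≤ ε / 2 := by
    intro κ _ hκ
    rw [dist_eq_norm, ← integral_sub (integrable_continuous hκ p.continuous)
      (integrable_continuous hκ f.continuous)]
    refine (norm_integral_le_of_norm_le_const (C := ε / 2) ?_).trans (by simp)
    filter_upwards [hκ] with x hx using (hp x (abs_le.1 hx)).le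
  have h1 := close μ hμ
  have h2 := close ν hν
  rw [hpoly p] at h1
  linarith [dist_triangle_left (∫ x, f x ∂μ) (∫ x, f x ∂ν) (∫ x, p.eval x ∂ν)]

/-- Measures whose inverse Stieltjes transforms agree near `0` are equal. -/
lemma eq_of_Ginv_eq (hR : 0 < R) (hμ : ∀ᵐ x ∂μ, |x| ≤ R) (hν : ∀ᵐ x ∂ν, |x| ≤ R) {ε : ℝ}
    (hε : 0 < ε) (h : ∀ u, u ≠ 0 → |u| < ε → Ginv μ (-u) = Ginv ν (-u)) : μ = ν := by
  have hM : 0 < R + (ε⁻¹ + 8 * R) := by positivity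
  refine eq_of_moments hμ hν (moments_eq hR hμ hν hM fun z hz => ?_)
  have hzR : R < |z| := by have := inv_pos.2 hε; linarith
  -- for `|z|` large, `u = -G_μ(z)` is small and `z` is the preimage of `-u` under both transforms
  obtain ⟨u, hu⟩ : ∃ u, Gst μ z = -u := ⟨-Gst μ z, by ring⟩
  have hu0 : u ≠ 0 := by
    rintro rfl
    rw [neg_zero] at hu
    rcases lt_abs.1 hzR with hz' | hz'
    · exact (Gst_neg_right hμ ((bSup_le hμ).trans_lt hz')).ne hu
    · exact (Gst_pos_left hμ (lt_of_lt_of_le (by linarith) (neg_le_aInf hμ))).ne' hu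
  have hub : |u| ≤ (|z| - R)⁻¹ := by
    rw [← abs_neg, ← hu, Gst, ← Real.norm_eq_abs]
    refine (norm_integral_le_of_norm_le_const (C := (|z| - R)⁻¹) ?_).trans (by simp)
    filter_upwards [hμ] with x hx
    rw [norm_inv, Real.norm_eq_abs]
    refine inv_anti₀ (by linarith) ?_
    have := abs_sub_abs_le_abs_sub z x
    rw [abs_sub_comm] at this
    linarith
  have hsmall : |u| * R ≤ 1 / 8 := by
    have : |u| ≤ (8 * R)⁻¹ := hub.trans (inv_anti₀ (by positivity) (by
      have := inv_pos.2 hε; linarith))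
    calc |u| * R ≤ (8 * R)⁻¹ * R := by gcongr
      _ = 1 / 8 := by field_simp
  have hlt : |u| < ε := by
    refine hub.trans_lt ?_
    rw [inv_lt_comm₀ (by linarith) hε]
    linarith
  have := (Ginv_spec hR hν hu0 hsmall).2
  rw [← h u hu0 hlt, Ginv_eq hμ hzR hu] at this
  rw [hu, this]

end Uniqueness

/-! ### The free additive convolution -/

lemma exists_ae_abs_le {μ : Measure ℝ} [IsProbabilityMeasure μ] (h : HasCompactSupp μ) :
    ∃ R, 0 < R ∧ ∀ᵐ x ∂μ, |x| ≤ R := by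
  obtain ⟨K, hK, hμ⟩ := h
  obtain ⟨R, hR, hKR⟩ := hK.isBounded.exists_pos_norm_le
  refine ⟨R, hR, ?_⟩
  have : K ∈ ae μ := (prob_compl_eq_zero_iff hK.measurableSet).2 hμ
  filter_upwards [this] with x hx using hKR x hx

/-- existence and uniqueness of the free additive convolution `μ ⊞ ν`,
characterized by additivity of the real `R`-transforms near `0`. -/
theorem statement10 (μ ν : MeasureTheory.Measure ℝ)
    [MeasureTheory.IsProbabilityMeasure μ] [MeasureTheory.IsProbabilityMeasure ν]
    (hcμ : HasCompactSupp μ) (hcν : HasCompactSupp ν) :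
    ∃! ρ : MeasureTheory.Measure ℝ,
      MeasureTheory.IsProbabilityMeasure ρ ∧ HasCompactSupp ρ ∧
      ∃ ε > (0 : ℝ), ∀ u : ℝ, u ∈ Set.Ioo (-ε) ε → u ≠ 0 →
        u ∈ Dhat ρ ∧ u ∈ Dhat μ ∧ u ∈ Dhat ν ∧ Rhat ρ u = Rhat μ u + Rhat ν u := by
  obtain ⟨R₁, hR₁, hμ₁⟩ := exists_ae_abs_le hcμ
  obtain ⟨R₂, hR₂, hν₂⟩ := exists_ae_abs_le hcν
  obtain ⟨R, hR, hμ, hν⟩ : ∃ R, 0 < R ∧ (∀ᵐ x ∂μ, |x| ≤ R) ∧ ∀ᵐ x ∂ν, |x| ≤ R :=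
    ⟨max R₁ R₂, lt_max_of_lt_left hR₁, hμ₁.mono fun x hx => hx.trans (le_max_left _ _),
      hν₂.mono fun x hx => hx.trans (le_max_right _ _)⟩
  obtain ⟨ρ, hρprob, hρsupp, hρ⟩ := exists_free_convolution μ ν hR hμ hν
  have h2R : (0 : ℝ) < 2 * R := by positivity
  have hρae : ∀ᵐ x ∂ρ, |x| ≤ 2 * R := by
    have : Icc (-(2 * R)) (2 * R) ∈ ae ρ := (prob_compl_eq_zero_iff measurableSet_Icc).2 hρsupp
    filter_upwards [this] with x hx using abs_le.2 hx
  have hadd : ∀ u : ℝ, u ∈ Set.Ioo (-(32 * R)⁻¹) (32 * R)⁻¹ → u ≠ 0 →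
      u ∈ Dhat ρ ∧ u ∈ Dhat μ ∧ u ∈ Dhat ν ∧ Rhat ρ u = Rhat μ u + Rhat ν u := by
    intro u hu hu0
    have huR : |u| * (2 * R) ≤ 1 / 16 := by
      calc |u| * (2 * R) ≤ (32 * R)⁻¹ * (2 * R) := by gcongr; exact (abs_lt.2 hu).le
        _ = 1 / 16 := by field_simp; norm_num
    have huR' : |u| * R ≤ 1 / 16 := by nlinarith [abs_nonneg u]
    refine ⟨mem_Dhat h2R hρae hu0 huR, mem_Dhat hR hμ hu0 huR', mem_Dhat hR hν hu0 huR', ?_⟩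
    obtain ⟨ha, ha'⟩ := Ginv_spec hR hμ hu0 (by linarith)
    obtain ⟨hb, hb'⟩ := Ginv_spec hR hν hu0 (by linarith)
    set a := Ginv μ (-u) with ha_def
    set b := Ginv ν (-u) with hb_def
    have hflip : ∀ (κ : Measure ℝ) (z : ℝ), ∫ x, (z - x)⁻¹ ∂κ = -Gst κ z := by
      intro κ z
      rw [Gst, ← integral_neg]
      congr 1
      ext x
      rw [← neg_sub, inv_neg]
    have hc := hρ u a b hu0 (by linarith) ha hb (by rw [hflip, ha', neg_neg])
      (by rw [hflip, hb', neg_neg])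
    rw [hflip, neg_eq_iff_eq_neg] at hc
    have hdist : |a + b - u⁻¹ - u⁻¹| ≤ 2 * R := by
      rw [show a + b - u⁻¹ - u⁻¹ = (a - u⁻¹) + (b - u⁻¹) by ring]
      exact (abs_add_le _ _).trans (by linarith)
    have := Ginv_eq hρae (lt_abs_of_abs_sub_inv_le hu0 h2R (by linarith) hdist) hc
    rw [Rhat, Rhat, Rhat, this, ← ha_def, ← hb_def]
    ring
  refine ⟨ρ, ⟨hρprob, ⟨_, isCompact_Icc, hρsupp⟩, (32 * R)⁻¹, by positivity, hadd⟩, ?_⟩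
  rintro ρ' ⟨hρ'prob, hρ'comp, ε, hε, hρ'⟩
  obtain ⟨R', hR', hρ'ae⟩ := exists_ae_abs_le hρ'comp
  refine eq_of_Ginv_eq (R := max (2 * R) R') (lt_max_of_lt_left h2R)
    (hρ'ae.mono fun x hx => hx.trans (le_max_right _ _))
    (hρae.mono fun x hx => hx.trans (le_max_left _ _))
    (ε := min (32 * R)⁻¹ ε) (lt_min (by positivity) hε) fun u hu0 hu => ?_
  obtain ⟨hu1, hu2⟩ := lt_min_iff.1 hu
  have h1 := (hadd u (abs_lt.1 hu1) hu0).2.2.2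
  have h2 := (hρ' u (abs_lt.1 hu2) hu0).2.2.2
  have := h2.trans h1.symm
  rwa [Rhat, Rhat, sub_left_inj] at this
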